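/- Let T ∈ Λ³V be a 3-form and set σ_T := (1/2)·Σᵢ (eᵢ⨼T)∧(eᵢ⨼T) ∈ Λ⁴V. Then in Cl(V) one has T·T = −2·σ_T + ‖T‖²·1, where T and σ_T are regarded as elements of Cl(V) under the canonical identification, the product T·T is the Clifford product, and ‖T‖² is the squared norm of T induced by ⟨·,·⟩ (for which the forms e_i∧e_j∧e_k, i<j<k, are orthonormal). -/

import Mathlib

noncomputable section

/-- The quadratic form `Q(v) = −⟨v,v⟩ = −‖v‖²` on `V = ℝⁿ`, so that in `Cl(V)` one has
`v·v = −‖v‖²` and `v·w + w·v = −2⟨v,w⟩`. -/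
def negQ (n : ℕ) : QuadraticForm ℝ (Fin n → ℝ) :=
  QuadraticMap.weightedSumSquares ℝ (fun _ : Fin n => (-1 : ℝ))

/-- The orthonormal basis vector `eᵢ` viewed inside the Clifford algebra `Cl(V)`. -/
def eCl (n : ℕ) (i : Fin n) : CliffordAlgebra (negQ n) :=
  CliffordAlgebra.ι (negQ n) (Pi.single i 1)

/-- The orthonormal basis vector `eᵢ` viewed inside the exterior algebra `ΛV`. -/
def eExt (n : ℕ) (i : Fin n) : ExteriorAlgebra ℝ (Fin n → ℝ) :=
  ExteriorAlgebra.ι ℝ (Pi.single i 1)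

/-- The dual functional `⟨eᵢ, ·⟩` of `eᵢ` with respect to the inner product, i.e. the
`i`-th coordinate functional. -/
def coordDual (n : ℕ) (i : Fin n) : Module.Dual ℝ (Fin n → ℝ) := LinearMap.proj i

/-- Interior contraction `eᵢ⨼ ·` on the exterior algebra `ΛV` (the exterior algebra is
the Clifford algebra of the zero form, and `contractLeft` is contraction). -/
def contr (n : ℕ) (i : Fin n) :
    ExteriorAlgebra ℝ (Fin n → ℝ) →ₗ[ℝ] ExteriorAlgebra ℝ (Fin n → ℝ) :=
  CliffordAlgebra.contractLeft (Q := (0 : QuadraticForm ℝ (Fin n → ℝ))) (coordDual n i)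

/-- The canonical linear identification `ΛV ≅ Cl(V)` sending
`e_{i₁} ∧ ⋯ ∧ e_{i_k}` (for `i₁ < ⋯ < i_k`) to the Clifford product
`e_{i₁} ⋯ e_{i_k}`. -/
def phi (n : ℕ) : ExteriorAlgebra ℝ (Fin n → ℝ) ≃ₗ[ℝ] CliffordAlgebra (negQ n) :=
  (CliffordAlgebra.equivExterior (negQ n)).symm


/-- The 4-form `σ_T := (1/2)·Σᵢ (eᵢ⨼T) ∧ (eᵢ⨼T) ∈ Λ⁴V` associated to a 3-form `T`
(products taken in the exterior algebra, i.e. wedge products). -/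
def sigmaT (n : ℕ) (T : ExteriorAlgebra ℝ (Fin n → ℝ)) : ExteriorAlgebra ℝ (Fin n → ℝ) :=
  ((1 : ℝ) / 2) • ∑ i, contr n i T * contr n i T

/-
Clifford multiplication by a vector `u` is `u ∧ · - u ⨼ ·` in terms of forms, so induction on the
degree `k` of `x` gives the Clifford product as `x · y = ∑ₚ (-1)^(kp + p(p-1)/2) / p! • Cₚ(x, y)`,
where `Cₚ` wedges `p`-fold contractions of `x` and `y` along a common orthonormal frame. For
`x = y = T` of degree 3, the terms with `p` even are sums of squares of odd forms and vanish. The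
term `p = 1` is `-∑ᵢ (eᵢ ⨼ T) ∧ (eᵢ ⨼ T) = -2 σ_T`, and the term `p = 3` is `‖T‖²`, because each
`eᵢ ∧ eⱼ ∧ eₖ` is seen by the `3!` orderings of its indices.
-/

section

open CliffordAlgebra
open scoped Nat

local infixl:70 "⌋" => contractLeft

variable {R M I : Type*} [CommRing R] [AddCommGroup M] [Module R M]

theorem involute_contractLeft {Q : QuadraticForm R M} (d : Module.Dual R M)
    (x : CliffordAlgebra Q) : involute (d⌋x) = -(d⌋involute x) := by
  induction x using CliffordAlgebra.left_induction with
  | algebraMap r => simp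
  | add x y hx hy => simp only [map_add, hx, hy, neg_add]
  | ι_mul x m hx =>
    simp only [contractLeft_ι_mul, map_sub, map_smul, map_mul, map_neg, involute_ι, hx, neg_mul,
      mul_neg]
    abel

theorem contractLeft_mul {Q : QuadraticForm R M} (d : Module.Dual R M) (x y : CliffordAlgebra Q) :
    d⌋(x * y) = d⌋x * y + involute x * (d⌋y) := by
  induction x using CliffordAlgebra.left_induction with
  | algebraMap r => simp [contractLeft_algebraMap_mul]
  | add x x' hx hx' =>
    simp only [map_add, add_mul, hx, hx']
    abel
  | ι_mul x m hx =>
    simp only [mul_assoc, contractLeft_ι_mul, map_mul, involute_ι, hx, sub_mul, mul_add, neg_mul,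
      smul_mul_assoc]
    abel

theorem involute_eq_smul_of_mem_exteriorPower {k : ℕ} {x : ExteriorAlgebra R M}
    (hx : x ∈ ⋀[R]^k M) : involute x = (-1 : R) ^ k • x := by
  induction hx using Submodule.pow_induction_on_left' with
  | algebraMap r => simp
  | add x y k _ _ hx hy => simp only [map_add, smul_add, hx, hy]
  | mem_mul m hm k x _ hx =>
    obtain ⟨v, rfl⟩ := hm
    rw [map_mul, involute_ι, hx, neg_mul, mul_smul_comm, pow_succ, mul_neg_one, neg_smul]

theorem exteriorAlgebra_ι_mul (v : M) (x : ExteriorAlgebra R M) :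
    ExteriorAlgebra.ι R v * x = involute x * ExteriorAlgebra.ι R v := by
  induction x using CliffordAlgebra.left_induction with
  | algebraMap r => simp [Algebra.commutes]
  | add x y hx hy => simp only [map_add, mul_add, add_mul, hx, hy]
  | ι_mul x w hx =>
    rw [← mul_assoc, eq_neg_of_add_eq_zero_left (ExteriorAlgebra.ι_add_mul_swap v w), neg_mul,
      mul_assoc, hx, map_mul, involute_ι, neg_mul, neg_mul, mul_assoc]

theorem mul_eq_mul_involute_of_involute_eq_neg {y : ExteriorAlgebra R M} (hy : involute y = -y)
    (x : ExteriorAlgebra R M) : x * y = y * involute x := by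
  induction x using CliffordAlgebra.left_induction with
  | algebraMap r => simp [Algebra.commutes]
  | add x x' hx hx' => simp only [map_add, mul_add, add_mul, hx, hx']
  | ι_mul x v hx =>
    rw [mul_assoc, hx, ← mul_assoc, exteriorAlgebra_ι_mul, hy, map_mul, involute_ι, neg_mul,
      neg_mul, neg_mul, mul_neg, mul_assoc]

theorem mul_self_eq_zero_of_involute_eq_neg [Invertible (2 : R)] {x : ExteriorAlgebra R M}
    (hx : involute x = -x) : x * x = 0 := by
  have hneg : x * x = -(x * x) := by
    simpa only [hx, mul_neg] using mul_eq_mul_involute_of_involute_eq_neg hx x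
  rw [← (isUnit_of_invertible (2 : R)).smul_eq_zero, two_smul]
  exact eq_neg_iff_add_eq_zero.mp hneg

theorem ι_mul_mem_exteriorPower_succ {k : ℕ} (u : M) {x : ExteriorAlgebra R M}
    (hx : x ∈ ⋀[R]^k M) : ExteriorAlgebra.ι R u * x ∈ ⋀[R]^(k + 1) M := by
  rw [ExteriorAlgebra.exteriorPower, pow_succ']
  exact Submodule.mul_mem_mul ⟨u, rfl⟩ hx

theorem ι_mul_ι_mul_ι_mem_exteriorPower_three (u v w : M) :
    ExteriorAlgebra.ι R u * ExteriorAlgebra.ι R v * ExteriorAlgebra.ι R w ∈ ⋀[R]^3 M := by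
  rw [ExteriorAlgebra.exteriorPower, pow_three']
  exact Submodule.mul_mem_mul (Submodule.mul_mem_mul ⟨u, rfl⟩ ⟨v, rfl⟩) ⟨w, rfl⟩

theorem contractLeft_ι_mul_ι_mul_ι {Q : QuadraticForm R M} (d₁ d₂ d₃ : Module.Dual R M)
    (u v w : M) :
    d₃⌋(d₂⌋(d₁⌋(ι Q u * ι Q v * ι Q w))) = algebraMap R (CliffordAlgebra Q)
      !![d₁ u, d₁ v, d₁ w; d₂ u, d₂ v, d₂ w; d₃ u, d₃ v, d₃ w].det := by
  simp only [mul_assoc, contractLeft_ι_mul, contractLeft_ι, map_sub, map_smul, Matrix.det_fin_three,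
    Algebra.algebraMap_eq_smul_one, mul_smul_comm, mul_one, contractLeft_one, smul_zero, mul_zero,
    sub_zero, Matrix.of_apply, Matrix.cons_val]
  module

-- Of the six permutations in the determinant, only the identity can match two increasing triples.
theorem det_dual_of_lt [LinearOrder I] {ε : I → Module.Dual R M} {e : I → M}
    (he : ∀ i j, ε i (e j) = if i = j then 1 else 0) {i j k l m p : I} (hij : i < j) (hjk : j < k)
    (hlm : l < m) (hmp : m < p) :
    !![ε i (e l), ε i (e m), ε i (e p); ε j (e l), ε j (e m), ε j (e p);
      ε k (e l), ε k (e m), ε k (e p)].det = if i = l ∧ j = m ∧ k = p then 1 else 0 := by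
  simp only [Matrix.det_fin_three, he, Matrix.of_apply, Matrix.cons_val]
  grind

variable [Fintype I] (ε : I → Module.Dual R M)

/-- The bilinear form `∑ i, εᵢ ⊗ εᵢ`, i.e. the inner product `⟨·,·⟩` when `ε` is the coframe dual to
an orthonormal basis. Contraction by the vector `u` is contraction by `coframeForm ε u`. -/
def coframeForm : LinearMap.BilinForm R M := ∑ i, (ε i).smulRight (ε i)

theorem coframeForm_apply (u : M) : coframeForm ε u = ∑ i, ε i u • ε i := by
  simp [coframeForm]

theorem coframeForm_contractLeft {Q : QuadraticForm R M} (u : M) (x : CliffordAlgebra Q) :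
    coframeForm ε u⌋x = ∑ i, ε i u • (ε i⌋x) := by
  simp [coframeForm_apply]

/-- The `p`-fold contracted wedge product
`∑ i₁ … i_p, (e_{i_p}⨼⋯⨼e_{i₁}⨼x) ∧ (e_{i_p}⨼⋯⨼e_{i₁}⨼y)`, with `ε i` standing for `⟨eᵢ, ·⟩`. -/
def contractedProduct : ℕ → ExteriorAlgebra R M →ₗ[R] ExteriorAlgebra R M →ₗ[R] ExteriorAlgebra R M
  | 0 => LinearMap.mul R (ExteriorAlgebra R M)
  | p + 1 => ∑ i, (contractedProduct p).compl₁₂ (contractLeft (ε i)) (contractLeft (ε i))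

theorem contractedProduct_zero (x y : ExteriorAlgebra R M) :
    contractedProduct ε 0 x y = x * y := rfl

theorem contractedProduct_succ (p : ℕ) (x y : ExteriorAlgebra R M) :
    contractedProduct ε (p + 1) x y = ∑ i, contractedProduct ε p (ε i⌋x) (ε i⌋y) := by
  simp [contractedProduct]

theorem contractedProduct_succ_ι_mul (p : ℕ) (u : M) (x y : ExteriorAlgebra R M) :
    contractedProduct ε (p + 1) (ExteriorAlgebra.ι R u * x) y =
      (p + 1 : R) • contractedProduct ε p x (coframeForm ε u⌋y) +
        (-1 : R) ^ (p + 1) • (ExteriorAlgebra.ι R u * contractedProduct ε (p + 1) x y) := by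
  induction p generalizing x y with
  | zero =>
    simp [contractedProduct_succ, contractedProduct_zero, contractLeft_ι_mul,
      coframeForm_contractLeft, mul_assoc, Finset.mul_sum, sub_eq_add_neg,
      Finset.sum_add_distrib]
  | succ p ih =>
    have hterm (i : I) : contractedProduct ε (p + 1) (ε i⌋(ExteriorAlgebra.ι R u * x)) (ε i⌋y) =
        ε i u • contractedProduct ε (p + 1) x (ε i⌋y) +
          (p + 1 : R) • contractedProduct ε p (ε i⌋x) (ε i⌋(coframeForm ε u⌋y)) +
          (-1 : R) ^ (p + 2) •
            (ExteriorAlgebra.ι R u * contractedProduct ε (p + 1) (ε i⌋x) (ε i⌋y)) := by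
      rw [contractLeft_ι_mul, map_sub, map_smul, LinearMap.sub_apply, LinearMap.smul_apply, ih,
        contractLeft_comm (coframeForm ε u), map_neg]
      module
    rw [contractedProduct_succ, Finset.sum_congr rfl fun i _ ↦ hterm i, Finset.sum_add_distrib,
      Finset.sum_add_distrib, ← Finset.smul_sum, ← Finset.smul_sum, ← Finset.mul_sum,
      ← contractedProduct_succ, ← contractedProduct_succ, coframeForm_contractLeft, map_sum]
    simp only [map_smul, Nat.cast_add, Nat.cast_one]
    module

theorem contractedProduct_eq_zero_of_lt {k p : ℕ} (hkp : k < p) {x : ExteriorAlgebra R M}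
    (hx : x ∈ ⋀[R]^k M) (y : ExteriorAlgebra R M) : contractedProduct ε p x y = 0 := by
  obtain ⟨p, rfl⟩ := Nat.exists_eq_add_one_of_ne_zero (Nat.ne_zero_of_lt hkp)
  induction hx using Submodule.pow_induction_on_left' generalizing p y with
  | algebraMap r => simp [contractedProduct_succ]
  | add x x' k _ _ hx hx' => simp [hx y p hkp, hx' y p hkp]
  | mem_mul m hm k x _ hx =>
    obtain ⟨u, rfl⟩ := hm
    obtain ⟨p, rfl⟩ := Nat.exists_eq_add_one_of_ne_zero (show p ≠ 0 by lia)
    rw [contractedProduct_succ_ι_mul, hx _ p (by lia), hx _ (p + 1) (by lia)]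
    simp

theorem contractedProduct_ι_mul_of_mem {k : ℕ} (u : M) {x : ExteriorAlgebra R M}
    (hx : x ∈ ⋀[R]^k M) (y : ExteriorAlgebra R M) :
    contractedProduct ε (k + 1) (ExteriorAlgebra.ι R u * x) y =
      (k + 1 : R) • contractedProduct ε k x (coframeForm ε u⌋y) := by
  rw [contractedProduct_succ_ι_mul, contractedProduct_eq_zero_of_lt ε k.lt_succ_self hx, mul_zero,
    smul_zero, add_zero]

theorem contractedProduct_three_ι_mul_ι_mul_ι (u v w : M)
    (y : ExteriorAlgebra R M) :
    contractedProduct ε 3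
        (ExteriorAlgebra.ι R u * ExteriorAlgebra.ι R v * ExteriorAlgebra.ι R w) y =
      (6 : R) • (coframeForm ε w⌋(coframeForm ε v⌋(coframeForm ε u⌋y))) := by
  have hone : (1 : ExteriorAlgebra R M) ∈ ⋀[R]^0 M := by simp
  have hw := ι_mul_mem_exteriorPower_succ w hone
  have hvw := ι_mul_mem_exteriorPower_succ v hw
  rw [mul_assoc, ← mul_one (ExteriorAlgebra.ι R w), contractedProduct_ι_mul_of_mem ε u hvw,
    contractedProduct_ι_mul_of_mem ε v hw, contractedProduct_ι_mul_of_mem ε w hone,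
    contractedProduct_zero, one_mul]
  module

theorem contractedProduct_self_eq_zero_of_even [Invertible (2 : R)] {p : ℕ} (hp : Even p)
    {x : ExteriorAlgebra R M} (hx : involute x = -x) : contractedProduct ε p x x = 0 := by
  obtain ⟨q, rfl⟩ := hp
  induction q generalizing x with
  | zero => exact mul_self_eq_zero_of_involute_eq_neg hx
  | succ q ih =>
    have hcontract (i j : I) : involute (ε j⌋(ε i⌋x)) = -(ε j⌋(ε i⌋x)) := by
      simp only [involute_contractLeft, hx, map_neg, neg_neg]
    rw [show q + 1 + (q + 1) = q + q + 1 + 1 by lia]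
    simp only [contractedProduct_succ, ih (hcontract _ _), Finset.sum_const_zero]

section Trivector

variable [LinearOrder I] {ε : I → Module.Dual R M} {e : I → M}

/-- The 3-form with coefficients `a i j k` on the `e i ∧ e j ∧ e k`, `i < j < k`. -/
def trivector (e : I → M) (a : I → I → I → R) : ExteriorAlgebra R M :=
  ∑ i, ∑ j, ∑ k, if i < j ∧ j < k then
    a i j k • (ExteriorAlgebra.ι R (e i) * ExteriorAlgebra.ι R (e j) * ExteriorAlgebra.ι R (e k))
  else 0

theorem trivector_mem_exteriorPower (e : I → M) (a : I → I → I → R) :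
    trivector e a ∈ ⋀[R]^3 M := by
  refine sum_mem fun i _ ↦ sum_mem fun j _ ↦ sum_mem fun k _ ↦ ?_
  split_ifs
  · exact Submodule.smul_mem _ _ (ι_mul_ι_mul_ι_mem_exteriorPower_three _ _ _)
  · exact zero_mem _

theorem coframeForm_apply_of_dual (he : ∀ i j, ε i (e j) = if i = j then 1 else 0) (j : I) :
    coframeForm ε (e j) = ε j := by
  simp [coframeForm_apply, he]

theorem contractLeft_trivector (he : ∀ i j, ε i (e j) = if i = j then 1 else 0)
    (a : I → I → I → R) {i j k : I} (hij : i < j) (hjk : j < k) :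
    ε k⌋(ε j⌋(ε i⌋trivector e a)) = algebraMap R (ExteriorAlgebra R M) (a i j k) := by
  have hterm (l m p : I) :
      ε k⌋(ε j⌋(ε i⌋if l < m ∧ m < p then a l m p •
          (ExteriorAlgebra.ι R (e l) * ExteriorAlgebra.ι R (e m) * ExteriorAlgebra.ι R (e p))
        else 0)) =
      if i = l ∧ j = m ∧ k = p then algebraMap R (ExteriorAlgebra R M) (a i j k) else 0 := by
    by_cases hlmp : l < m ∧ m < p
    · rw [if_pos hlmp, map_smul, map_smul, map_smul, contractLeft_ι_mul_ι_mul_ι,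
        det_dual_of_lt he hij hjk hlmp.1 hlmp.2]
      split_ifs with heq
      · obtain ⟨rfl, rfl, rfl⟩ := heq
        rw [map_one, Algebra.algebraMap_eq_smul_one]
      · rw [map_zero, smul_zero]
    · rw [if_neg hlmp, if_neg (by grind), map_zero, map_zero, map_zero]
  simp only [trivector, map_sum, hterm]
  simp [ite_and]

theorem contractedProduct_three_trivector (he : ∀ i j, ε i (e j) = if i = j then 1 else 0)
    (a : I → I → I → R) (y : ExteriorAlgebra R M) :
    contractedProduct ε 3 (trivector e a) y =
      (6 : R) • ∑ i, ∑ j, ∑ k,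
        if i < j ∧ j < k then a i j k • (ε k⌋(ε j⌋(ε i⌋y))) else 0 := by
  simp only [trivector, map_sum, LinearMap.sum_apply, Finset.smul_sum]
  refine Finset.sum_congr rfl fun i _ ↦ Finset.sum_congr rfl fun j _ ↦
    Finset.sum_congr rfl fun k _ ↦ ?_
  split_ifs
  · rw [map_smul, LinearMap.smul_apply, contractedProduct_three_ι_mul_ι_mul_ι, smul_comm,
      coframeForm_apply_of_dual he, coframeForm_apply_of_dual he, coframeForm_apply_of_dual he]
  · simp

theorem contractedProduct_three_trivector_self (he : ∀ i j, ε i (e j) = if i = j then 1 else 0)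
    (a : I → I → I → R) :
    contractedProduct ε 3 (trivector e a) (trivector e a) =
      (6 : R) • algebraMap R (ExteriorAlgebra R M)
        (∑ i, ∑ j, ∑ k, if i < j ∧ j < k then a i j k ^ 2 else 0) := by
  rw [contractedProduct_three_trivector he]
  simp only [map_sum]
  congr! with i _ j _ k
  split_ifs with h
  · rw [contractLeft_trivector he a h.1 h.2, sq, map_mul, Algebra.smul_def]
  · simp

end Trivector

theorem involute_changeForm {Q Q' : QuadraticForm R M} {B : LinearMap.BilinForm R M}
    (h : B.toQuadraticMap = Q' - Q) (x : CliffordAlgebra Q) :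
    involute (changeForm h x) = changeForm h (involute x) := by
  induction x using CliffordAlgebra.left_induction with
  | algebraMap r => simp
  | add x y hx hy => simp only [map_add, hx, hy]
  | ι_mul x v hx =>
    simp only [changeForm_ι_mul, map_sub, map_mul, involute_ι, involute_contractLeft, hx, neg_mul,
      map_neg]
    abel

theorem changeForm_ι_mul_mul_changeForm {Q Q' : QuadraticForm R M} {B : LinearMap.BilinForm R M}
    (h : B.toQuadraticMap = Q' - Q) (u : M) {x y z : CliffordAlgebra Q}
    (hz : changeForm h x * changeForm h y = changeForm h z) :
    changeForm h (ι Q u * x) * changeForm h y =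
      changeForm h (ι Q u * z) + changeForm h (involute x) * changeForm h (B u⌋y) := by
  have hcontract := contractLeft_mul (B u) (changeForm h x) (changeForm h y)
  rw [hz, involute_changeForm] at hcontract
  rw [changeForm_ι_mul, changeForm_ι_mul, sub_mul, mul_assoc, hz, hcontract,
    changeForm_contractLeft]
  abel

theorem equivExterior_symm_apply [Invertible (2 : R)] {Q : QuadraticForm R M}
    {B : LinearMap.BilinForm R M} (hB : B.IsSymm) (h : B.toQuadraticMap = Q - 0)
    (x : ExteriorAlgebra R M) : (equivExterior Q).symm x = changeForm h x := by
  have hneg : (-B).toQuadraticMap = -Q := by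
    rw [LinearMap.BilinMap.toQuadraticMap_neg, h, sub_zero]
  have hassoc : B = -QuadraticMap.associated (-Q) := by
    rw [← hneg, QuadraticMap.associated_left_inverse R hB.neg.eq]
    exact (neg_neg B).symm
  subst hassoc
  rfl

section Field

variable {K : Type*} [Field K]

variable (K) in
/-- The coefficient of the `p`-fold contracted product in the Clifford product of a `k`-form with an
arbitrary form. -/
def cliffordCoeff (k p : ℕ) : K := (-1) ^ (k * p + p.choose 2) / p !

theorem cliffordCoeff_zero_right (k : ℕ) : cliffordCoeff K k 0 = 1 := by simp [cliffordCoeff]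

theorem cliffordCoeff_succ_mul_neg_one_pow (k p : ℕ) :
    cliffordCoeff K (k + 1) p * (-1) ^ p = cliffordCoeff K k p := by
  have hexp : (k + 1) * p + p.choose 2 + p = k * p + p.choose 2 + 2 * p := by ring
  rw [cliffordCoeff, div_mul_eq_mul_div, ← pow_add, hexp, pow_add, (even_two_mul p).neg_one_pow,
    mul_one, cliffordCoeff]

variable [Module K M] (ε : I → Module.Dual K M)

/-- The exterior element identified with the Clifford product of `x ∈ ⋀ᵏM` and `y`, for the
quadratic form `-∑ i, εᵢ²`. -/
def cliffordProduct (k : ℕ) (x y : ExteriorAlgebra K M) : ExteriorAlgebra K M :=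
  ∑ p ∈ Finset.range (k + 1), cliffordCoeff K k p • contractedProduct ε p x y

variable [CharZero K]

theorem cliffordCoeff_succ_succ_mul (k p : ℕ) :
    cliffordCoeff K (k + 1) (p + 1) * (p + 1) = -((-1) ^ k * cliffordCoeff K k p) := by
  have hexp : (k + 1) * (p + 1) + (p + 1).choose 2 = k + (k * p + p.choose 2) + 1 + 2 * p := by
    rw [Nat.choose_succ_succ' p 1, Nat.choose_one_right]
    ring
  have hp : (p + 1 : K) ≠ 0 := p.cast_add_one_ne_zero
  have hfact : (p ! : K) ≠ 0 := mod_cast p.factorial_ne_zero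
  rw [cliffordCoeff, cliffordCoeff, hexp, pow_add, (even_two_mul p).neg_one_pow, mul_one, pow_succ,
    pow_add, Nat.factorial_succ]
  push_cast
  field_simp

theorem cliffordProduct_ι_mul {k : ℕ} (u : M) {x : ExteriorAlgebra K M} (hx : x ∈ ⋀[K]^k M)
    (y : ExteriorAlgebra K M) :
    cliffordProduct ε (k + 1) (ExteriorAlgebra.ι K u * x) y =
      ExteriorAlgebra.ι K u * cliffordProduct ε k x y -
        (-1 : K) ^ k • cliffordProduct ε k x (coframeForm ε u⌋y) := by
  have hterm (p : ℕ) :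
      cliffordCoeff K (k + 1) (p + 1) •
          contractedProduct ε (p + 1) (ExteriorAlgebra.ι K u * x) y =
        ExteriorAlgebra.ι K u * cliffordCoeff K k (p + 1) • contractedProduct ε (p + 1) x y -
          (-1 : K) ^ k • cliffordCoeff K k p • contractedProduct ε p x (coframeForm ε u⌋y) := by
    rw [contractedProduct_succ_ι_mul, smul_add, smul_smul, smul_smul, cliffordCoeff_succ_succ_mul,
      cliffordCoeff_succ_mul_neg_one_pow, mul_smul_comm]
    module
  have hlast : contractedProduct ε (k + 1) x y = 0 :=
    contractedProduct_eq_zero_of_lt ε k.lt_succ_self hx y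
  have hextend : cliffordProduct ε k x y =
      ∑ p ∈ Finset.range (k + 2), cliffordCoeff K k p • contractedProduct ε p x y := by
    rw [Finset.sum_range_succ, hlast, smul_zero, add_zero, cliffordProduct]
  rw [hextend, cliffordProduct, cliffordProduct, Finset.sum_range_succ',
    Finset.sum_range_succ' _ (k + 1), Finset.sum_congr rfl fun p _ ↦ hterm p,
    Finset.sum_sub_distrib, mul_add, Finset.mul_sum, Finset.smul_sum, cliffordCoeff_zero_right,
    cliffordCoeff_zero_right, one_smul, one_smul, contractedProduct_zero, contractedProduct_zero,
    mul_assoc]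
  abel

theorem changeForm_mul_changeForm {Q : QuadraticForm K M}
    (h : (-coframeForm ε).toQuadraticMap = Q - 0) {k : ℕ} {x : ExteriorAlgebra K M}
    (hx : x ∈ ⋀[K]^k M) (y : ExteriorAlgebra K M) :
    changeForm h x * changeForm h y = changeForm h (cliffordProduct ε k x y) := by
  induction hx using Submodule.pow_induction_on_left' generalizing y with
  | algebraMap r =>
    simp [cliffordProduct, cliffordCoeff_zero_right, contractedProduct_zero, ← Algebra.smul_def]
  | add x x' k _ _ hx hx' =>
    simp [cliffordProduct, add_mul, hx, hx', Finset.sum_add_distrib]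
  | mem_mul m hm k x hmem hx =>
    obtain ⟨u, rfl⟩ := hm
    rw [changeForm_ι_mul_mul_changeForm h u (hx y), cliffordProduct_ι_mul ε u hmem,
      involute_eq_smul_of_mem_exteriorPower hmem, map_smul, smul_mul_assoc, hx]
    simp [cliffordProduct, sub_eq_add_neg]

theorem changeForm_sq_of_mem_exteriorPower_three {Q : QuadraticForm K M}
    (h : (-coframeForm ε).toQuadraticMap = Q - 0) {T : ExteriorAlgebra K M} (hT : T ∈ ⋀[K]^3 M) :
    changeForm h T * changeForm h T = -changeForm h (contractedProduct ε 1 T T) +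
      (6⁻¹ : K) • changeForm h (contractedProduct ε 3 T T) := by
  have hodd : involute T = -T := by
    rw [involute_eq_smul_of_mem_exteriorPower hT, Odd.neg_one_pow (by decide), neg_one_smul]
  have : Invertible (2 : K) := invertibleOfNonzero two_ne_zero
  have hzero : contractedProduct ε 0 T T = 0 :=
    contractedProduct_self_eq_zero_of_even ε (by decide) hodd
  have htwo : contractedProduct ε 2 T T = 0 :=
    contractedProduct_self_eq_zero_of_even ε (by decide) hodd
  have hcoeff_one : cliffordCoeff K 3 1 = -1 := by norm_num [cliffordCoeff]
  have hcoeff_three : cliffordCoeff K 3 3 = 6⁻¹ := by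
    norm_num [cliffordCoeff, Nat.choose, Nat.factorial]
  rw [changeForm_mul_changeForm ε h hT, cliffordProduct]
  simp [Finset.sum_range_succ, hzero, htwo, hcoeff_one, hcoeff_three]

end Field

theorem torsion_clifford_square_general {K : Type*} [Field K] [CharZero K] [Invertible (2 : K)]
    [Module K M] [LinearOrder I] (e : I → M) (ε : I → Module.Dual K M)
    (he : ∀ i j, ε i (e j) = if i = j then 1 else 0)
    (Q : QuadraticForm K M) (hQ : ∀ v, Q v = -∑ i, ε i v ^ 2) (a : I → I → I → K)
    (T : ExteriorAlgebra K M) (hT : T = trivector e a) :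
    (equivExterior Q).symm T * (equivExterior Q).symm T =
      (-2 : K) • (equivExterior Q).symm ((1 / 2 : K) • ∑ i, ε i⌋T * (ε i⌋T)) +
        (∑ i, ∑ j, ∑ k, if i < j ∧ j < k then a i j k ^ 2 else 0) • 1 := by
  have h : (-coframeForm ε).toQuadraticMap = Q - 0 := by
    ext v
    simp [coframeForm_apply, hQ, sq]
  have hsymm : (-coframeForm ε).IsSymm := ⟨fun u v ↦ by simp [coframeForm_apply, mul_comm]⟩
  have hσ : (∑ i, ε i⌋T * (ε i⌋T)) = contractedProduct ε 1 T T := by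
    rw [contractedProduct_succ]
    rfl
  have hnorm := contractedProduct_three_trivector_self he a
  rw [← hT] at hnorm
  simp only [equivExterior_symm_apply hsymm h, hσ]
  rw [changeForm_sq_of_mem_exteriorPower_three ε h (hT ▸ trivector_mem_exteriorPower e a), hnorm,
    map_smul, map_smul, changeForm_algebraMap, Algebra.algebraMap_eq_smul_one]
  module

end

/-- Lemma C.1 (6): for a 3-form `T ∈ Λ³V` with coefficients `a i j k` on the
orthonormal forms `eᵢ∧eⱼ∧e_k` (`i<j<k`), one has in `Cl(V)` the identity
`T·T = −2σ_T + ‖T‖²·1`, where `T` and `σ_T` are regarded in `Cl(V)` via the canonical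
identification, `T·T` is the Clifford product, and `‖T‖² = Σ_{i<j<k} (a i j k)²`. -/
theorem torsion_clifford_square (n : ℕ) (a : Fin n → Fin n → Fin n → ℝ)
    (T : ExteriorAlgebra ℝ (Fin n → ℝ))
    (hT : T = ∑ i, ∑ j, ∑ k, if i < j ∧ j < k
        then a i j k • (eExt n i * eExt n j * eExt n k) else 0)
    (normSqT : ℝ)
    (hnorm : normSqT = ∑ i, ∑ j, ∑ k, if i < j ∧ j < k then (a i j k) ^ 2 else 0) :
    phi n T * phi n T
      = (-2 : ℝ) • phi n (sigmaT n T) + normSqT • (1 : CliffordAlgebra (negQ n)) := by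
  subst hnorm
  exact torsion_clifford_square_general (fun i ↦ Pi.single i 1) (coordDual n)
    (by simp [coordDual, Pi.single_apply]) (negQ n)
    (by simp [negQ, coordDual, QuadraticMap.weightedSumSquares_apply, sq]) a T hT
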